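/- There exists a constant C > 0, depending only on λ and A*, such that: (1) for all T₁, T₂ ∈ 𝓜 with transfer operators ℒ₁, ℒ₂ and every Lipschitz continuous h : 𝕊 → ℝ, ‖(ℒ₁ − ℒ₂)h‖_∞ ≤ C ‖h‖_Lip · d_{C¹}(T₁, T₂); and (2) for all k ≥ 1 and all T_i, T̃_i ∈ 𝓜 (1 ≤ i ≤ k) with transfer operators ℒ_i, ℒ̃_i, and every Lipschitz continuous h, ‖(ℒ_k ⋯ ℒ_1 − ℒ̃_k ⋯ ℒ̃_1)h‖_∞ ≤ C ‖h‖_Lip · Σ_{j=1}^k d_{C¹}(T_j, T̃_j). -/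

import Mathlib

open MeasureTheory Filter Topology Set UniformConvergence

noncomputable section

instance : Fact ((0:ℝ) < 1) := ⟨zero_lt_one⟩

/-- The circle `𝕊 = ℝ/ℤ`. -/
abbrev Circle1 : Type := AddCircle (1 : ℝ)

/-- A `C²` expanding circle map with expansion `≥ lam` and `‖T''‖_∞ ≤ Astar`,
encoded by a lift `F : ℝ → ℝ` satisfying `F (x+1) = F x + deg`. -/
structure CM (lam Astar : ℝ) where
  F : ℝ → ℝ
  deg : ℤ
  lift_add_one : ∀ x : ℝ, F (x + 1) = F x + deg
  contDiff : ContDiff ℝ 2 F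
  expanding : ∀ x : ℝ, lam ≤ deriv F x
  second_bound : ∀ x : ℝ, |deriv (deriv F) x| ≤ Astar

namespace CM

variable {lam Astar : ℝ}

/-- The induced map on the circle. -/
def toMap (T : CM lam Astar) : Circle1 → Circle1 :=
  fun x => (↑(T.F ((AddCircle.equivIco 1 0 x : ℝ))) : Circle1)

/-- The derivative of `T`, as a function on the circle. -/
def dmap (T : CM lam Astar) : Circle1 → ℝ :=
  fun x => deriv T.F ((AddCircle.equivIco 1 0 x : ℝ))

end CM

/-- The `C¹` distance on the space of maps. -/
def dC1 {lam Astar : ℝ} (T₁ T₂ : CM lam Astar) : ℝ :=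
  (⨆ x : Circle1, dist (T₁.toMap x) (T₂.toMap x)) + (⨆ x : Circle1, |T₁.dmap x - T₂.dmap x|)

/-- The transfer operator `ℒ_T h (x) = ∑_{T y = x} h y / T' y`. -/
def transfer {lam Astar : ℝ} (T : CM lam Astar) (h : Circle1 → ℝ) : Circle1 → ℝ :=
  fun x => ∑' y : {y : Circle1 // T.toMap y = x}, h y / T.dmap y

/-- Iterated transfer operators `ℒ_k ⋯ ℒ_1` of the sequence `T_1, T_2, …` (`Ts i = T_i`). -/
def transferIter {lam Astar : ℝ} (Ts : ℕ → CM lam Astar) : ℕ → (Circle1 → ℝ) → (Circle1 → ℝ)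
  | 0, h => h
  | (k+1), h => transfer (Ts (k+1)) (transferIter Ts k h)

/-- Composition `T_k ∘ ⋯ ∘ T_1` as circle maps. -/
def mapIter {lam Astar : ℝ} (Ts : ℕ → CM lam Astar) : ℕ → Circle1 → Circle1
  | 0 => id
  | (k+1) => (Ts (k+1)).toMap ∘ mapIter Ts k

/-- Composition of the lifts `F_k ∘ ⋯ ∘ F_1`. -/
def liftIter {lam Astar : ℝ} (Ts : ℕ → CM lam Astar) : ℕ → ℝ → ℝ
  | 0 => id
  | (k+1) => (Ts (k+1)).F ∘ liftIter Ts k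

/-- A real representative of `z`. -/
def zrep (z : Circle1) : ℝ := (AddCircle.equivIco 1 0 z : ℝ)

/-- The coordinate on the cut circle `J_z = 𝕊 ∖ {z}`. -/
def arcCoord (z x : Circle1) : ℝ := ((AddCircle.equivIoc 1 (zrep z) x : ℝ))

/-- `|x − y|_z`: the length of the subarc of `J_z` connecting `x` and `y`. -/
def arcDist (z x y : Circle1) : ℝ := |arcCoord z x - arcCoord z y|

/-- `g` is Lipschitz on `J_z = 𝕊 ∖ {z}` with constant `L`. -/
def LipOnArc (z : Circle1) (L : ℝ) (g : Circle1 → ℝ) : Prop :=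
  ∀ x y : Circle1, x ≠ z → y ≠ z → |g x - g y| ≤ L * arcDist z x y

/-- A probability density w.r.t. the Haar–Lebesgue measure `𝔪` on the circle. -/
def IsProbDensity (ψ : Circle1 → ℝ) : Prop :=
  Integrable ψ volume ∧ (∫ x : Circle1, ψ x) = 1 ∧ ∀ x, 0 ≤ ψ x

/-- The class `𝒟_L`: positive probability densities whose logarithm is Lipschitz
with constant `L` on `J_z` for some `z`. -/
def memD (L : ℝ) (ψ : Circle1 → ℝ) : Prop :=
  IsProbDensity ψ ∧ (∀ x, 0 < ψ x) ∧ ∃ z : Circle1, LipOnArc z L (fun x => Real.log (ψ x))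

/-- The `L¹(𝔪)` norm. -/
def l1norm (h : Circle1 → ℝ) : ℝ := ∫ x : Circle1, |h x|

/-- The supremum norm. -/
def supNorm (h : Circle1 → ℝ) : ℝ := ⨆ x : Circle1, |h x|

/-- The Lipschitz constant of `h` (w.r.t. the metric of the circle). -/
def lipConst (h : Circle1 → ℝ) : ℝ :=
  sInf {L : ℝ | 0 ≤ L ∧ ∀ x y : Circle1, |h x - h y| ≤ L * dist x y}

/-- The Lipschitz norm `‖h‖_Lip = Lip(h) + ‖h‖_∞`. -/
def lipNorm (h : Circle1 → ℝ) : ℝ := lipConst h + supNorm h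

/-- `ρ` is the density of the SRB measure of `T`: the density of a `T`-invariant
probability measure equivalent to `𝔪`. -/
def IsSRBDensity {lam Astar : ℝ} (T : CM lam Astar) (ρ : Circle1 → ℝ) : Prop :=
  IsProbDensity ρ ∧ (∀ᵐ x : Circle1, 0 < ρ x) ∧
    Measure.map T.toMap (volume.withDensity (fun x => ENNReal.ofReal (ρ x))) =
      volume.withDensity (fun x => ENNReal.ofReal (ρ x))

section QDS

variable {lam Astar : ℝ}

/-- `x_{n,k} = T_{n,k} ∘ ⋯ ∘ T_{n,1}` for a triangular array. -/
def arrIter (Tarr : ℕ → ℕ → CM lam Astar) (n : ℕ) : ℕ → Circle1 → Circle1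
  | 0 => id
  | (k+1) => (Tarr n (k+1)).toMap ∘ arrIter Tarr n k

/-- `ℒ_{n,k} ⋯ ℒ_{n,1}` for a triangular array. -/
def arrTransfer (Tarr : ℕ → ℕ → CM lam Astar) (n : ℕ) : ℕ → (Circle1 → ℝ) → (Circle1 → ℝ)
  | 0, h => h
  | (k+1), h => transfer (Tarr n (k+1)) (arrTransfer Tarr n k h)

/-- `f_{n,k} = f ∘ T_{n,k} ∘ ⋯ ∘ T_{n,1}` evaluated at `x`. -/
def fnk (Tarr : ℕ → ℕ → CM lam Astar) (f : Circle1 → ℝ) (n k : ℕ) (x : Circle1) : ℝ :=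
  f (arrIter Tarr n k x)

/-- `ζₙ(x,t) = n⁻¹ (∑_{k<⌊nt⌋} f_{n,k}(x) + {nt}·f_{n,⌊nt⌋}(x))`. -/
def zetaP (Tarr : ℕ → ℕ → CM lam Astar) (f : Circle1 → ℝ) (n : ℕ) (x : Circle1) (t : ℝ) : ℝ :=
  (n : ℝ)⁻¹ * ((∑ k ∈ Finset.range ⌊(n : ℝ) * t⌋₊, fnk Tarr f n k x) +
    Int.fract ((n : ℝ) * t) * fnk Tarr f n ⌊(n : ℝ) * t⌋₊ x)

/-- `ξₙ(x,t) = √n ζₙ(x,t) − √n μ(ζₙ(·,t))` for a measure `μ`. -/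
def xiP (Tarr : ℕ → ℕ → CM lam Astar) (f : Circle1 → ℝ) (μ : Measure Circle1) (n : ℕ)
    (x : Circle1) (t : ℝ) : ℝ :=
  Real.sqrt n * zetaP Tarr f n x t - Real.sqrt n * ∫ y, zetaP Tarr f n y t ∂μ

/-- The Hölder continuity (exponent `η`) of the curve `γ` on `[0,1]`, w.r.t. `d_{C¹}`. -/
def HolderCurve (η : ℝ) (γ : ℝ → CM lam Astar) : Prop :=
  ∃ H : ℝ, ∀ s ∈ Icc (0:ℝ) 1, ∀ t ∈ Icc (0:ℝ) 1, dC1 (γ s) (γ t) ≤ H * |s - t| ^ η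

/-- The convergence-rate condition `sup_n n^η sup_t d_{C¹}(T_{n,⌊nt⌋}, γ_t) < ∞`. -/
def ArrayApprox (η : ℝ) (γ : ℝ → CM lam Astar) (Tarr : ℕ → ℕ → CM lam Astar) : Prop :=
  ∃ M : ℝ, ∀ n : ℕ, 1 ≤ n → ∀ t ∈ Icc (0:ℝ) 1,
    (n : ℝ) ^ η * dC1 (Tarr n ⌊(n : ℝ) * t⌋₊) (γ t) ≤ M

end QDS

/-- The path space: functions `[0,1] → ℝ` with the topology of uniform convergence;
continuous paths (with the supremum metric) embed isometrically. -/
abbrev PathSpace : Type := (Icc (0:ℝ) 1) →ᵤ ℝ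

instance : MeasurableSpace PathSpace := borel PathSpace

/-- A function `[0,1] → ℝ` (given as a function on `ℝ`) as a point of the path space. -/
def pathOf (g : ℝ → ℝ) : PathSpace := UniformFun.ofFun (fun t => g t)

/-- Evaluation of a path at time `t` (clamped to `[0,1]`). -/
def evalPath (t : ℝ) (ω : PathSpace) : ℝ := UniformFun.toFun ω (projIcc 0 1 zero_le_one t)


section Extra

variable {lam Astar : ℝ}

/-- `μ(ζₙ(·,t))` for the measure with density `ρ` w.r.t. `𝔪`. -/
def zetaMean (Tarr : ℕ → ℕ → CM lam Astar) (f : Circle1 → ℝ) (ρ : Circle1 → ℝ)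
    (n : ℕ) (t : ℝ) : ℝ :=
  ∫ y : Circle1, zetaP Tarr f n y t * ρ y

/-- `𝔪(ζₙ(·,t))`, the mean w.r.t. the Lebesgue measure. -/
def zetaMeanM (Tarr : ℕ → ℕ → CM lam Astar) (f : Circle1 → ℝ) (n : ℕ) (t : ℝ) : ℝ :=
  ∫ y : Circle1, zetaP Tarr f n y t

/-- `ξₙ(x,t) = √n ζₙ(x,t) − √n μ(ζₙ(·,t))`, where `μ` has density `ρ`. -/
def xiD (Tarr : ℕ → ℕ → CM lam Astar) (f : Circle1 → ℝ) (ρ : Circle1 → ℝ)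
    (n : ℕ) (x : Circle1) (t : ℝ) : ℝ :=
  Real.sqrt n * zetaP Tarr f n x t - Real.sqrt n * zetaMean Tarr f ρ n t

end Extra

/-- The σ-algebra `𝔉_t` on the path space, generated by the evaluations at times `s ∈ [0,t]`. -/
def pathFiltration (t : ℝ) : MeasurableSpace PathSpace :=
  ⨆ (s : ℝ) (_ : 0 ≤ s ∧ s ≤ t), MeasurableSpace.comap (evalPath s) (borel ℝ)

/-- The process `M_t(ω) = A(ω(t)) − A(ω(0)) − ½∫₀ᵗ σ̂ₛ²·A''(ω(s)) ds`. -/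
def MGproc (σ2 : ℝ → ℝ) (A : ℝ → ℝ) (t : ℝ) (ω : PathSpace) : ℝ :=
  A (evalPath t ω) - A (evalPath 0 ω) -
    (1/2) * ∫ s in (0:ℝ)..t, σ2 s * deriv (deriv A) (evalPath s ω)

/-- `P` solves the martingale problem on `C⁰([0,1],ℝ)` for the generator `½σ̂ₜ² d²/dx²`,
started at `0`:  `P` is a probability measure, concentrated on continuous paths starting at `0`,
and for every `A ∈ C_c^∞(ℝ)` the process `MGproc σ2 A` is a `P`-martingale w.r.t. the
natural filtration `𝔉_t`.  -/
def SolvesMartingaleProblem (σ2 : ℝ → ℝ) (P : Measure PathSpace) : Prop :=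
  IsProbabilityMeasure P ∧
  P {ω : PathSpace | evalPath 0 ω = 0} = 1 ∧
  P {ω : PathSpace | Continuous (UniformFun.toFun ω)} = 1 ∧
  ∀ A : ℝ → ℝ, ContDiff ℝ (⊤ : ℕ∞) A → HasCompactSupport A →
    (∀ t ∈ Icc (0:ℝ) 1, Integrable (MGproc σ2 A t) P) ∧
    (∀ t ∈ Icc (0:ℝ) 1, @Measurable PathSpace ℝ (pathFiltration t) _ (MGproc σ2 A t)) ∧
    (∀ s ∈ Icc (0:ℝ) 1, ∀ t ∈ Icc (0:ℝ) 1, s ≤ t →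
      P[MGproc σ2 A t | pathFiltration s] =ᵐ[P] MGproc σ2 A s)

end

/-! Call a nonnegative function *log-Lipschitz* with constant `a` if `f x ≤ exp (a d(x, y)) f y`.
These functions form a convex cone. For an expanding map, pulling back along an inverse branch
contracts distances by `lam⁻¹` and dividing by `T'` costs at most `Astar` in the exponent, so every
transfer operator preserves the cone as soon as `a + Astar ≤ lam * a`. It also preserves integrals,
and on the cone the integral controls the supremum: `f ≤ exp (a / 2) ∫ f`.

For the one-step bound one may assume `d(T₁, T₂) < 1 / 2`, the other case being trivial. Then the
difference of the lifts stays close to one fixed integer, so the degrees agree and the inverse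
branches can be compared one by one.

For the iterated bound, every Lipschitz function is a difference of two elements of the cone, so
the images `ℒ_j ⋯ ℒ_1 h` stay uniformly Lipschitz, and the one-step bound applies to each of them.
In the telescoping sum the one-step errors are dominated by constants, which lie in the cone, so the
remaining operators do not change the integral of this bound. -/

/-- A nonnegative function that is log-Lipschitz with constant `a`: it vanishes identically or is
positive with `a`-Lipschitz logarithm. The condition is written multiplicatively so that these
functions form a convex cone containing `0`. -/
structure IsLogLipschitz {X : Type*} [PseudoMetricSpace X] (a : ℝ) (f : X → ℝ) : Prop where
  nonneg : ∀ x, 0 ≤ f x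
  le_exp_mul : ∀ x y, f x ≤ Real.exp (a * dist x y) * f y

namespace IsLogLipschitz

variable {X Y : Type*} [PseudoMetricSpace X] [PseudoMetricSpace Y] {a b : ℝ} {f g : X → ℝ}

theorem const {c : ℝ} (ha : 0 ≤ a) (hc : 0 ≤ c) : IsLogLipschitz a (fun _ : X => c) where
  nonneg _ := hc
  le_exp_mul x y := le_mul_of_one_le_left hc (Real.one_le_exp (by positivity))

theorem sum {ι : Type*} {s : Finset ι} {f : ι → X → ℝ} (hf : ∀ i ∈ s, IsLogLipschitz a (f i)) :
    IsLogLipschitz a (fun x => ∑ i ∈ s, f i x) where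
  nonneg x := Finset.sum_nonneg fun i hi => (hf i hi).nonneg x
  le_exp_mul x y := by
    rw [Finset.mul_sum]
    exact Finset.sum_le_sum fun i hi => (hf i hi).le_exp_mul x y

theorem add (hf : IsLogLipschitz a f) (hg : IsLogLipschitz a g) :
    IsLogLipschitz a (fun x => f x + g x) where
  nonneg x := add_nonneg (hf.nonneg x) (hg.nonneg x)
  le_exp_mul x y := by
    rw [mul_add]
    exact add_le_add (hf.le_exp_mul x y) (hg.le_exp_mul x y)

theorem div (hf : IsLogLipschitz a f) (hg : IsLogLipschitz b g) (hg_pos : ∀ x, 0 < g x) :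
    IsLogLipschitz (a + b) (fun x => f x / g x) where
  nonneg x := div_nonneg (hf.nonneg x) (hg.nonneg x)
  le_exp_mul x y := by
    rw [← mul_div_assoc, div_le_div_iff₀ (hg_pos x) (hg_pos y)]
    calc f x * g y
        ≤ (Real.exp (a * dist x y) * f y) * (Real.exp (b * dist y x) * g x) :=
          mul_le_mul (hf.le_exp_mul x y) (hg.le_exp_mul y x) (hg.nonneg y)
            (mul_nonneg (Real.exp_pos _).le (hf.nonneg y))
      _ = Real.exp ((a + b) * dist x y) * f y * g x := by
          rw [dist_comm y x, add_mul, Real.exp_add]; ring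

theorem comp (hf : IsLogLipschitz a f) {φ : Y → X}
    (hφ : ∀ x y, a * dist (φ x) (φ y) ≤ b * dist x y) : IsLogLipschitz b (fun y => f (φ y)) where
  nonneg y := hf.nonneg (φ y)
  le_exp_mul x y := (hf.le_exp_mul (φ x) (φ y)).trans
    (mul_le_mul_of_nonneg_right (Real.exp_le_exp.2 (hφ x y)) (hf.nonneg _))

theorem of_abs_sub_le {m L : ℝ} (ha : 0 ≤ a) (hm : 0 ≤ m) (hmf : ∀ x, m ≤ f x) (hL : L ≤ a * m)
    (hf : ∀ x y, |f x - f y| ≤ L * dist x y) : IsLogLipschitz a f where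
  nonneg x := hm.trans (hmf x)
  le_exp_mul x y := by
    have hf_nonneg : 0 ≤ f y := hm.trans (hmf y)
    calc f x ≤ f y + L * dist x y := by linarith [(le_abs_self _).trans (hf x y)]
      _ ≤ f y + (a * f y) * dist x y := by gcongr; exact hL.trans (by gcongr; exact hmf y)
      _ = (a * dist x y + 1) * f y := by ring
      _ ≤ Real.exp (a * dist x y) * f y := by gcongr; exact Real.add_one_le_exp _

theorem continuous (hf : IsLogLipschitz a f) : Continuous f := by
  refine continuous_iff_continuousAt.2 fun x => ?_
  have hlow : Tendsto (fun y => Real.exp (-(a * dist x y)) * f x) (𝓝 x) (𝓝 (f x)) :=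
    (by fun_prop : Continuous fun y => Real.exp (-(a * dist x y)) * f x).tendsto' _ _ (by simp)
  have hup : Tendsto (fun y => Real.exp (a * dist y x) * f x) (𝓝 x) (𝓝 (f x)) :=
    (by fun_prop : Continuous fun y => Real.exp (a * dist y x) * f x).tendsto' _ _ (by simp)
  refine tendsto_of_tendsto_of_tendsto_of_le_of_le hlow hup (fun y => ?_)
    fun y => hf.le_exp_mul y x
  rw [Real.exp_neg, inv_mul_le_iff₀ (Real.exp_pos _)]
  exact hf.le_exp_mul x y

theorem sub_le_mul_dist (hf : IsLogLipschitz a f) (x y : X) : f x - f y ≤ a * dist x y * f x := by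
  have hfy : Real.exp (-(a * dist x y)) * f x ≤ f y := by
    rw [Real.exp_neg, inv_mul_le_iff₀ (Real.exp_pos _)]
    exact hf.le_exp_mul x y
  nlinarith [Real.add_one_le_exp (-(a * dist x y)), hf.nonneg x]

theorem abs_sub_le {M : ℝ} (ha : 0 ≤ a) (hf : IsLogLipschitz a f) (hM : ∀ x, f x ≤ M) (x y : X) :
    |f x - f y| ≤ a * M * dist x y := by
  have hsub (x y : X) : f x - f y ≤ a * M * dist x y :=
    calc f x - f y ≤ a * dist x y * f x := hf.sub_le_mul_dist x y
      _ ≤ a * dist x y * M := by gcongr; exact hM x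
      _ = a * M * dist x y := by ring
  exact abs_sub_le_iff.2 ⟨hsub x y, dist_comm x y ▸ hsub y x⟩

theorem le_exp_mul_integral [MeasurableSpace X] {μ : Measure X} [IsProbabilityMeasure μ] {D : ℝ}
    (ha : 0 ≤ a) (hf : IsLogLipschitz a f) (hf_int : Integrable f μ) (hD : ∀ x y : X, dist x y ≤ D)
    (x : X) : f x ≤ Real.exp (a * D) * ∫ y, f y ∂μ :=
  calc f x = ∫ _, f x ∂μ := by simp
    _ ≤ ∫ y, Real.exp (a * D) * f y ∂μ := by
        refine integral_mono (integrable_const _) (hf_int.const_mul _) fun y => ?_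
        refine (hf.le_exp_mul x y).trans (mul_le_mul_of_nonneg_right ?_ (hf.nonneg y))
        exact Real.exp_le_exp.2 (mul_le_mul_of_nonneg_left (hD x y) ha)
    _ = Real.exp (a * D) * ∫ y, f y ∂μ := integral_const_mul _ _

end IsLogLipschitz

theorem abs_div_sub_div_le {x y p q : ℝ} (hp : 0 < p) (hq : 1 ≤ q) :
    |x / p - y / q| ≤ (|x - y| + |y| * |p - q|) / p := by
  have hq_pos : 0 < q := by linarith
  have hsplit : x / p - y / q = ((x - y) - y / q * (p - q)) / p := by field_simp; ring
  rw [hsplit, abs_div, abs_of_pos hp]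
  gcongr
  calc |x - y - y / q * (p - q)| ≤ |x - y| + |y / q * (p - q)| := abs_sub _ _
    _ ≤ |x - y| + |y| * |p - q| := by
        rw [abs_mul, abs_div, abs_of_pos hq_pos]
        gcongr
        exact div_le_self (abs_nonneg _) hq

theorem exists_int_forall_abs_sub_le {X : Type*} [TopologicalSpace X] [PreconnectedSpace X]
    {u : X → ℝ} (hu : Continuous u) {δ : ℝ} (hδ : δ < 1 / 2)
    (h : ∀ x, |u x - round (u x)| ≤ δ) : ∃ n : ℤ, ∀ x, |u x - n| ≤ δ := by
  have hloc : IsLocallyConstant fun x => round (u x) := by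
    refine (IsLocallyConstant.iff_eventually_eq _).2 fun x => ?_
    filter_upwards [hu.continuousAt.eventually (Metric.ball_mem_nhds (u x)
      (by linarith : 0 < 1 - 2 * δ))] with y hy
    rw [Real.dist_eq] at hy
    have hlt : |((round (u y) - round (u x) : ℤ) : ℝ)| < 1 := by
      have hx' := abs_le.1 (h x)
      have hy' := abs_le.1 (h y)
      have hxy := abs_lt.1 hy
      push_cast
      exact abs_lt.2 ⟨by linarith, by linarith⟩
    exact sub_eq_zero.1 (Int.abs_lt_one_iff.1 (by exact_mod_cast hlt))
  rcases isEmpty_or_nonempty X with _ | ⟨⟨x₀⟩⟩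
  · exact ⟨0, isEmptyElim⟩
  · exact ⟨round (u x₀), fun x => hloc.apply_eq_of_preconnectedSpace x x₀ ▸ h x⟩

namespace Circle1

instance : IsProbabilityMeasure (volume : Measure Circle1) := ⟨UnitAddCircle.measure_univ⟩

theorem coe_eq_coe_iff {s t : ℝ} : (s : Circle1) = t ↔ ∃ n : ℤ, s = t + n := by
  rw [← sub_eq_zero, ← AddCircle.coe_sub, AddCircle.coe_eq_zero_iff]
  exact exists_congr fun n => by rw [zsmul_eq_mul, mul_one, eq_sub_iff_add_eq', eq_comm]

theorem apply_equivIco_coe {α : Type*} {f : ℝ → α} (hf : Function.Periodic f 1) (s : ℝ) :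
    f (AddCircle.equivIco 1 0 (s : Circle1)) = f s := by
  rw [AddCircle.coe_equivIco_mk_apply, div_one, mul_one, Int.fract]
  simpa using hf.sub_int_mul_eq (x := s) ⌊s⌋

theorem dist_coe (s t : ℝ) : dist (s : Circle1) t = |s - t - round (s - t)| := by
  rw [dist_eq_norm, ← AddCircle.coe_sub, UnitAddCircle.norm_eq]

theorem dist_coe_le (s t : ℝ) : dist (s : Circle1) t ≤ dist s t := by
  rw [dist_coe, Real.dist_eq]
  simpa using round_le (s - t) 0

theorem dist_le_half (x y : Circle1) : dist x y ≤ 1 / 2 := by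
  simpa [dist_eq_norm] using AddCircle.norm_le_half_period (1 : ℝ) (x := x - y) one_ne_zero

theorem exists_coe_eq_dist_eq (x y : Circle1) :
    ∃ s t : ℝ, (s : Circle1) = x ∧ (t : Circle1) = y ∧ dist s t = dist x y := by
  obtain ⟨s, rfl⟩ := QuotientAddGroup.mk_surjective x
  obtain ⟨t, rfl⟩ := QuotientAddGroup.mk_surjective y
  refine ⟨s, t + round (s - t), rfl, coe_eq_coe_iff.2 ⟨_, rfl⟩, ?_⟩
  rw [dist_coe, Real.dist_eq, sub_sub]

theorem continuous_of_comp_coe {Y : Type*} [TopologicalSpace Y] {f : Circle1 → Y}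
    (hf : Continuous fun s : ℝ => f s) : Continuous f :=
  (QuotientAddGroup.isQuotientMap_mk (N := AddSubgroup.zmultiples (1 : ℝ))).continuous_iff.2 hf

theorem integrable_of_continuous {f : Circle1 → ℝ} (hf : Continuous f) : Integrable f :=
  hf.integrable_of_hasCompactSupport (HasCompactSupport.of_compactSpace f)

end Circle1

namespace IsLogLipschitz

variable {a : ℝ} {f : Circle1 → ℝ}

theorem comp_coe (ha : 0 ≤ a) (hf : IsLogLipschitz a f) : IsLogLipschitz a fun s : ℝ => f s :=
  hf.comp fun s t => mul_le_mul_of_nonneg_left (Circle1.dist_coe_le s t) ha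

theorem of_comp_coe (hf : IsLogLipschitz a fun s : ℝ => f s) : IsLogLipschitz a f where
  nonneg x := by
    obtain ⟨s, rfl⟩ := QuotientAddGroup.mk_surjective x
    exact hf.nonneg s
  le_exp_mul x y := by
    obtain ⟨s, t, rfl, rfl, hst⟩ := Circle1.exists_coe_eq_dist_eq x y
    exact hst ▸ hf.le_exp_mul s t

theorem integrable (hf : IsLogLipschitz a f) : Integrable f :=
  Circle1.integrable_of_continuous hf.continuous

theorem le_exp_half_mul_integral (ha : 0 ≤ a) (hf : IsLogLipschitz a f) (x : Circle1) :
    f x ≤ Real.exp (a / 2) * ∫ y, f y := by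
  simpa [div_eq_mul_inv] using hf.le_exp_mul_integral ha hf.integrable Circle1.dist_le_half x

end IsLogLipschitz

section Norms

variable {h : Circle1 → ℝ}

theorem abs_le_supNorm (hh : Continuous h) (x : Circle1) : |h x| ≤ supNorm h :=
  le_ciSup (f := fun x => |h x|) (isCompact_range hh.abs).bddAbove x

theorem supNorm_nonneg (h : Circle1 → ℝ) : 0 ≤ supNorm h := Real.iSup_nonneg fun _ => abs_nonneg _

theorem supNorm_le {S : ℝ} (hS : ∀ x, |h x| ≤ S) : supNorm h ≤ S := ciSup_le hS

theorem lipConst_nonneg (h : Circle1 → ℝ) : 0 ≤ lipConst h := Real.sInf_nonneg fun _ hL => hL.1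

theorem lipConst_le {L : ℝ} (hL : 0 ≤ L) (hh : ∀ x y, |h x - h y| ≤ L * dist x y) :
    lipConst h ≤ L :=
  csInf_le ⟨0, fun _ hK => hK.1⟩ ⟨hL, hh⟩

theorem abs_sub_le_lipConst_mul_dist {K : NNReal} (hh : LipschitzWith K h) (x y : Circle1) :
    |h x - h y| ≤ lipConst h * dist x y := by
  rcases eq_or_ne x y with rfl | hxy
  · simp
  have hd : 0 < dist x y := dist_pos.2 hxy
  rw [← div_le_iff₀ hd]
  exact le_csInf ⟨K, K.2, fun x y => hh.dist_le_mul x y⟩ fun L hL => (div_le_iff₀ hd).2 (hL.2 x y)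

theorem lipNorm_nonneg (h : Circle1 → ℝ) : 0 ≤ lipNorm h :=
  add_nonneg (lipConst_nonneg h) (supNorm_nonneg h)

end Norms

namespace CM

variable {lam Astar : ℝ}

theorem astar_nonneg (T : CM lam Astar) : 0 ≤ Astar := (abs_nonneg _).trans (T.second_bound 0)

theorem differentiable_lift (T : CM lam Astar) : Differentiable ℝ T.F :=
  T.contDiff.differentiable two_ne_zero

theorem continuous_deriv_lift (T : CM lam Astar) : Continuous (deriv T.F) :=
  T.contDiff.continuous_deriv one_le_two

theorem deriv_lift_pos (hlam : 0 < lam) (T : CM lam Astar) (s : ℝ) : 0 < deriv T.F s :=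
  hlam.trans_le (T.expanding s)

theorem abs_deriv_lift_sub_le (T : CM lam Astar) (s t : ℝ) :
    |deriv T.F s - deriv T.F t| ≤ Astar * |s - t| :=
  have hdiff : Differentiable ℝ (deriv T.F) := T.contDiff.differentiable_deriv_two
  convex_univ.norm_image_sub_le_of_norm_deriv_le (fun x _ => hdiff x)
    (fun x _ => T.second_bound x) (mem_univ t) (mem_univ s)

theorem mul_abs_sub_le (T : CM lam Astar) (s t : ℝ) : lam * |s - t| ≤ |T.F s - T.F t| := by
  wlog hts : t ≤ s generalizing s t
  · rw [abs_sub_comm s, abs_sub_comm (T.F s)]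
    exact this t s (le_of_not_ge hts)
  rw [abs_of_nonneg (sub_nonneg.2 hts)]
  exact (mul_sub_le_image_sub_of_le_deriv T.differentiable_lift T.expanding hts).trans
    (le_abs_self _)

theorem lift_add_int (T : CM lam Astar) (s : ℝ) (n : ℤ) : T.F (s + n) = T.F s + n * T.deg := by
  simpa using
    AddConstMapClass.map_add_int' (⟨T.F, T.lift_add_one⟩ : AddConstMap ℝ ℝ 1 (T.deg : ℝ)) s n

theorem deriv_lift_periodic (T : CM lam Astar) : Function.Periodic (deriv T.F) 1 := fun s => by
  rw [← deriv_comp_add_const, funext T.lift_add_one, deriv_add_const]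

theorem toMap_coe (T : CM lam Astar) (s : ℝ) : T.toMap s = (T.F s : Circle1) := by
  refine Circle1.apply_equivIco_coe (f := fun s => (T.F s : Circle1)) (fun s => ?_) s
  exact Circle1.coe_eq_coe_iff.2 ⟨T.deg, T.lift_add_one s⟩

theorem dmap_coe (T : CM lam Astar) (s : ℝ) : T.dmap s = deriv T.F s :=
  Circle1.apply_equivIco_coe T.deriv_lift_periodic s

theorem continuous_toMap (T : CM lam Astar) : Continuous T.toMap :=
  Circle1.continuous_of_comp_coe <| by
    simp only [toMap_coe]
    exact (AddCircle.continuous_mk' 1).comp T.differentiable_lift.continuous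

theorem continuous_dmap (T : CM lam Astar) : Continuous T.dmap :=
  Circle1.continuous_of_comp_coe <| by simpa only [dmap_coe] using T.continuous_deriv_lift

theorem deg_pos (hlam : 0 < lam) (T : CM lam Astar) : 0 < T.deg := by
  have hexp := mul_sub_le_image_sub_of_le_deriv T.differentiable_lift T.expanding
    (zero_le_one' ℝ)
  have hone : T.F 1 = T.F 0 + T.deg := by simpa using T.lift_add_one 0
  have hdeg : (0 : ℝ) < T.deg := by linarith
  exact_mod_cast hdeg

theorem deg_toNat_cast (hlam : 0 < lam) (T : CM lam Astar) : ((T.deg.toNat : ℕ) : ℝ) = T.deg := by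
  exact_mod_cast congrArg (Int.cast : ℤ → ℝ) (Int.toNat_of_nonneg (T.deg_pos hlam).le)

/-- The inverse of the lift of `T`; the lift is bijective, so that `Function.invFun` is a genuine
inverse, as soon as the lower bound `lam` on its derivative is positive. -/
noncomputable def invLift (T : CM lam Astar) : ℝ → ℝ := Function.invFun T.F

theorem lift_injective (hlam : 0 < lam) (T : CM lam Astar) : Function.Injective T.F :=
  (strictMono_of_deriv_pos (T.deriv_lift_pos hlam)).injective

theorem lift_surjective (hlam : 0 < lam) (T : CM lam Astar) : Function.Surjective T.F := fun t => by
  set r := |t - T.F 0| / lam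
  have hr : 0 ≤ r := by positivity
  have hlamr : lam * r = |t - T.F 0| := mul_div_cancel₀ _ hlam.ne'
  have hlow := mul_sub_le_image_sub_of_le_deriv T.differentiable_lift T.expanding
    (neg_nonpos.2 hr)
  have hup := mul_sub_le_image_sub_of_le_deriv T.differentiable_lift T.expanding hr
  exact mem_range_of_exists_le_of_exists_ge T.differentiable_lift.continuous
    ⟨-r, by linarith [neg_abs_le (t - T.F 0)]⟩ ⟨r, by linarith [le_abs_self (t - T.F 0)]⟩

theorem lift_invLift (hlam : 0 < lam) (T : CM lam Astar) (t : ℝ) : T.F (T.invLift t) = t :=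
  Function.rightInverse_invFun (T.lift_surjective hlam) t

theorem invLift_lift (hlam : 0 < lam) (T : CM lam Astar) (s : ℝ) : T.invLift (T.F s) = s :=
  Function.leftInverse_invFun (T.lift_injective hlam) s

theorem mul_abs_invLift_sub_le (hlam : 0 < lam) (T : CM lam Astar) (s t : ℝ) :
    lam * |T.invLift s - T.invLift t| ≤ |s - t| := by
  simpa only [T.lift_invLift hlam] using T.mul_abs_sub_le (T.invLift s) (T.invLift t)

theorem continuous_invLift (hlam : 0 < lam) (T : CM lam Astar) : Continuous T.invLift := by
  refine (LipschitzWith.of_dist_le' (K := lam⁻¹) fun s t => ?_).continuous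
  rw [inv_mul_eq_div, le_div_iff₀' hlam]
  exact T.mul_abs_invLift_sub_le hlam s t

theorem hasDerivAt_invLift (hlam : 0 < lam) (T : CM lam Astar) (t : ℝ) :
    HasDerivAt T.invLift (deriv T.F (T.invLift t))⁻¹ t :=
  HasDerivAt.of_local_left_inverse (T.continuous_invLift hlam).continuousAt
    (T.differentiable_lift _).hasDerivAt (T.deriv_lift_pos hlam _).ne'
    (Eventually.of_forall (T.lift_invLift hlam))

theorem invLift_add_int_mul_deg (hlam : 0 < lam) (T : CM lam Astar) (t : ℝ) (n : ℤ) :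
    T.invLift (t + n * T.deg) = T.invLift t + n :=
  T.lift_injective hlam <| by rw [T.lift_add_int, T.lift_invLift hlam, T.lift_invLift hlam]

/-- The transfer operator of the lift of `T`, a diffeomorphism of `ℝ`, applied to the `1`-periodic
function `s ↦ f s`. Each value of `transfer T f` is a sum of `deg` values of it. -/
noncomputable def liftTransfer (T : CM lam Astar) (f : Circle1 → ℝ) (t : ℝ) : ℝ :=
  f (T.invLift t : ℝ) / deriv T.F (T.invLift t)

/-- The points of the fibre of `T` above `t` that come from the translates `t, …, t + (deg - 1)`
of the lift `t`. -/
noncomputable def fibrePoint (hlam : 0 < lam) (T : CM lam Astar) (t : ℝ) (j : Fin T.deg.toNat) :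
    {y : Circle1 // T.toMap y = t} :=
  ⟨(T.invLift (t + (j : ℕ)) : ℝ), by
    rw [toMap_coe, T.lift_invLift hlam]
    exact Circle1.coe_eq_coe_iff.2 ⟨(j : ℕ), by push_cast; rfl⟩⟩

theorem fibrePoint_injective (hlam : 0 < lam) (T : CM lam Astar) (t : ℝ) :
    Function.Injective (T.fibrePoint hlam t) := by
  intro i j hij
  obtain ⟨n, hn⟩ := Circle1.coe_eq_coe_iff.1 (congrArg Subtype.val hij)
  rw [← T.invLift_add_int_mul_deg hlam] at hn
  have hmod : t + (i : ℕ) = t + (j : ℕ) + n * T.deg := by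
    simpa only [T.lift_invLift hlam] using congrArg T.F hn
  have hcongr : ((i : ℕ) : ℤ) = (j : ℕ) + n * T.deg := by
    rify; linarith
  have hdeg := Int.toNat_of_nonneg (T.deg_pos hlam).le
  refine Fin.ext (Nat.ModEq.eq_of_lt_of_lt ?_ i.2 j.2)
  rw [← Int.natCast_modEq_iff, hdeg, hcongr]
  exact Int.modEq_iff_dvd.2 ⟨-n, by ring⟩

theorem fibrePoint_surjective (hlam : 0 < lam) (T : CM lam Astar) (t : ℝ) :
    Function.Surjective (T.fibrePoint hlam t) := by
  rintro ⟨y, hy⟩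
  obtain ⟨s, rfl⟩ := QuotientAddGroup.mk_surjective y
  obtain ⟨m, hm⟩ := Circle1.coe_eq_coe_iff.1 ((T.toMap_coe s).symm.trans hy)
  have hdeg := T.deg_pos hlam
  have hmod_nonneg : 0 ≤ m % T.deg := Int.emod_nonneg m hdeg.ne'
  have hmod_lt : m % T.deg < T.deg := Int.emod_lt_of_pos m hdeg
  refine ⟨⟨(m % T.deg).toNat, by omega⟩, Subtype.ext (Circle1.coe_eq_coe_iff.2 ⟨-(m / T.deg), ?_⟩)⟩
  have hcast : (((m % T.deg).toNat : ℕ) : ℝ) = ((m % T.deg : ℤ) : ℝ) := by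
    exact_mod_cast congrArg (Int.cast : ℤ → ℝ) (Int.toNat_of_nonneg hmod_nonneg)
  have hdivmod : ((m % T.deg : ℤ) : ℝ) + T.deg * ((m / T.deg : ℤ) : ℝ) = m := by
    exact_mod_cast Int.emod_add_mul_ediv m T.deg
  have hshift : t + ((m % T.deg).toNat : ℕ) = T.F s + (-(m / T.deg) : ℤ) * T.deg := by
    rw [hcast, hm]; push_cast; linarith
  rw [hshift, T.invLift_add_int_mul_deg hlam, T.invLift_lift hlam]

theorem transfer_coe (hlam : 0 < lam) (T : CM lam Astar) (f : Circle1 → ℝ) (t : ℝ) :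
    transfer T f t = ∑ j ∈ Finset.range T.deg.toNat, T.liftTransfer f (t + j) := by
  let e := Equiv.ofBijective (T.fibrePoint hlam t)
    ⟨T.fibrePoint_injective hlam t, T.fibrePoint_surjective hlam t⟩
  rw [transfer, ← e.tsum_eq, tsum_fintype, Finset.sum_range]
  exact Finset.sum_congr rfl fun j _ => congrArg (f _ / ·) (T.dmap_coe _)

theorem transfer_sub (hlam : 0 < lam) (T : CM lam Astar) (f g : Circle1 → ℝ) (x : Circle1) :
    transfer T (fun y => f y - g y) x = transfer T f x - transfer T g x := by
  obtain ⟨t, rfl⟩ := QuotientAddGroup.mk_surjective x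
  simp only [T.transfer_coe hlam, liftTransfer, sub_div, Finset.sum_sub_distrib]

theorem abs_transfer_le (hlam : 0 < lam) (T : CM lam Astar) {f g : Circle1 → ℝ}
    (hfg : ∀ y, |f y| ≤ g y) (x : Circle1) : |transfer T f x| ≤ transfer T g x := by
  obtain ⟨t, rfl⟩ := QuotientAddGroup.mk_surjective x
  simp only [T.transfer_coe hlam]
  refine (Finset.abs_sum_le_sum_abs _ _).trans (Finset.sum_le_sum fun j _ => ?_)
  have hpos := T.deriv_lift_pos hlam (T.invLift (t + j))
  rw [liftTransfer, liftTransfer, abs_div, abs_of_pos hpos]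
  exact div_le_div_of_nonneg_right (hfg _) hpos.le

theorem continuous_liftTransfer (hlam : 0 < lam) (T : CM lam Astar) {f : Circle1 → ℝ}
    (hf : Continuous f) : Continuous (T.liftTransfer f) := by
  have hG := T.continuous_invLift hlam
  exact (hf.comp ((AddCircle.continuous_mk' 1).comp hG)).div (T.continuous_deriv_lift.comp hG)
    fun t => (T.deriv_lift_pos hlam _).ne'

theorem integral_liftTransfer (hlam : 0 < lam) (T : CM lam Astar) {f : Circle1 → ℝ}
    (hf : Continuous f) : ∫ t in (0 : ℝ)..T.deg, T.liftTransfer f t = ∫ x, f x := by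
  have hG := T.continuous_invLift hlam
  have hperiod : T.invLift T.deg = T.invLift 0 + 1 := by
    simpa using T.invLift_add_int_mul_deg hlam 0 1
  calc ∫ t in (0 : ℝ)..T.deg, T.liftTransfer f t
      = ∫ s in T.invLift 0..T.invLift T.deg, f (s : ℝ) :=
        intervalIntegral.integral_comp_mul_deriv (g := fun s : ℝ => f s)
          (fun t _ => T.hasDerivAt_invLift hlam t)
          ((T.continuous_deriv_lift.comp hG).inv₀
            fun t => (T.deriv_lift_pos hlam _).ne').continuousOn
          (hf.comp (AddCircle.continuous_mk' 1))
    _ = ∫ x, f x := by rw [hperiod, AddCircle.intervalIntegral_preimage]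

theorem integral_transfer (hlam : 0 < lam) (T : CM lam Astar) {f : Circle1 → ℝ}
    (hf : Continuous f) : ∫ x, transfer T f x = ∫ x, f x := by
  have hcont := T.continuous_liftTransfer hlam hf
  have hshift (j : ℕ) : ∫ t in (0 : ℝ)..1, T.liftTransfer f (t + j) =
      ∫ t in (j : ℝ)..(j + 1 : ℕ), T.liftTransfer f t := by
    rw [intervalIntegral.integral_comp_add_right, zero_add, Nat.cast_succ, add_comm (1 : ℝ)]
  calc ∫ x, transfer T f x = ∫ t in (0 : ℝ)..1, transfer T f (t : ℝ) := by
        rw [← AddCircle.intervalIntegral_preimage 1 0, zero_add]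
    _ = ∑ j ∈ Finset.range T.deg.toNat, ∫ t in (0 : ℝ)..1, T.liftTransfer f (t + j) := by
        simp only [T.transfer_coe hlam]
        exact intervalIntegral.integral_finsetSum
          fun j _ => (hcont.comp (continuous_add_const _)).intervalIntegrable _ _
    _ = ∫ t in ((0 : ℕ) : ℝ)..T.deg.toNat, T.liftTransfer f t := by
        simp only [hshift]
        exact intervalIntegral.sum_integral_adjacent_intervals
          fun _ _ => hcont.intervalIntegrable _ _
    _ = ∫ x, f x := by
        rw [Nat.cast_zero, T.deg_toNat_cast hlam, T.integral_liftTransfer hlam hf]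

theorem isLogLipschitz_deriv_lift (hlam : 1 ≤ lam) (T : CM lam Astar) :
    IsLogLipschitz Astar (deriv T.F) :=
  .of_abs_sub_le T.astar_nonneg zero_le_one (fun s => hlam.trans (T.expanding s))
    (mul_one Astar).ge T.abs_deriv_lift_sub_le

theorem isLogLipschitz_liftTransfer (hlam : 1 ≤ lam) {a : ℝ} (ha : 0 ≤ a)
    (hal : a + Astar ≤ lam * a) (T : CM lam Astar) {f : Circle1 → ℝ} (hf : IsLogLipschitz a f) :
    IsLogLipschitz a (T.liftTransfer f) := by
  have hlam_pos : 0 < lam := by linarith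
  have hquot : IsLogLipschitz (a + Astar) fun s : ℝ => f s / deriv T.F s :=
    (hf.comp_coe ha).div (T.isLogLipschitz_deriv_lift hlam) (T.deriv_lift_pos hlam_pos)
  refine hquot.comp fun s t => ?_
  calc (a + Astar) * |T.invLift s - T.invLift t|
      ≤ lam * a * |T.invLift s - T.invLift t| := by gcongr
    _ = a * (lam * |T.invLift s - T.invLift t|) := by ring
    _ ≤ a * |s - t| := by gcongr; exact T.mul_abs_invLift_sub_le hlam_pos s t

theorem isLogLipschitz_transfer (hlam : 1 ≤ lam) {a : ℝ} (ha : 0 ≤ a)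
    (hal : a + Astar ≤ lam * a) (T : CM lam Astar) {f : Circle1 → ℝ} (hf : IsLogLipschitz a f) :
    IsLogLipschitz a (transfer T f) := by
  refine .of_comp_coe ?_
  simp only [T.transfer_coe (by linarith : 0 < lam)]
  exact .sum fun j _ => (T.isLogLipschitz_liftTransfer hlam ha hal hf).comp fun s t => by
    rw [dist_add_right]

theorem transfer_const_le (hlam : 1 ≤ lam) {a : ℝ} (ha : 0 ≤ a) (hal : a + Astar ≤ lam * a)
    (T : CM lam Astar) {c : ℝ} (hc : 0 ≤ c) (x : Circle1) :
    transfer T (fun _ => c) x ≤ Real.exp (a / 2) * c := by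
  have hcone := T.isLogLipschitz_transfer hlam ha hal (.const ha hc)
  simpa [T.integral_transfer (by linarith : 0 < lam) continuous_const] using
    hcone.le_exp_half_mul_integral ha x

theorem dC1_nonneg (T₁ T₂ : CM lam Astar) : 0 ≤ dC1 T₁ T₂ :=
  add_nonneg (Real.iSup_nonneg fun _ => dist_nonneg) (Real.iSup_nonneg fun _ => abs_nonneg _)

theorem dist_toMap_le_dC1 (T₁ T₂ : CM lam Astar) (x : Circle1) :
    dist (T₁.toMap x) (T₂.toMap x) ≤ dC1 T₁ T₂ :=
  (le_ciSup (f := fun x => dist (T₁.toMap x) (T₂.toMap x))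
    (isCompact_range (T₁.continuous_toMap.dist T₂.continuous_toMap)).bddAbove x).trans
    (le_add_of_nonneg_right (Real.iSup_nonneg fun _ => abs_nonneg _))

theorem abs_deriv_lift_sub_le_dC1 (T₁ T₂ : CM lam Astar) (s : ℝ) :
    |deriv T₁.F s - deriv T₂.F s| ≤ dC1 T₁ T₂ := by
  rw [← T₁.dmap_coe, ← T₂.dmap_coe]
  exact (le_ciSup (f := fun x => |T₁.dmap x - T₂.dmap x|)
    (isCompact_range (T₁.continuous_dmap.sub T₂.continuous_dmap).abs).bddAbove s).trans
    (le_add_of_nonneg_left (Real.iSup_nonneg fun _ => dist_nonneg))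

theorem exists_int_abs_lift_sub_le {T₁ T₂ : CM lam Astar} (hD : dC1 T₁ T₂ < 1 / 2) :
    ∃ n : ℤ, ∀ s, |T₁.F s - T₂.F s - n| ≤ dC1 T₁ T₂ := by
  have hcont : Continuous fun s => T₁.F s - T₂.F s :=
    T₁.differentiable_lift.continuous.sub T₂.differentiable_lift.continuous
  refine exists_int_forall_abs_sub_le hcont hD fun s => ?_
  rw [← Circle1.dist_coe, ← T₁.toMap_coe, ← T₂.toMap_coe]
  exact dist_toMap_le_dC1 T₁ T₂ s

theorem deg_eq_of_abs_lift_sub_le {T₁ T₂ : CM lam Astar} {c D : ℝ} (hD : D < 1 / 2)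
    (h : ∀ s, |T₁.F s - T₂.F s - c| ≤ D) : T₁.deg = T₂.deg := by
  have h₀ := abs_le.1 (h 0)
  have h₁ := abs_le.1 (h (0 + 1))
  rw [T₁.lift_add_one, T₂.lift_add_one] at h₁
  have hlt : |((T₁.deg - T₂.deg : ℤ) : ℝ)| < 1 := by
    push_cast
    exact abs_lt.2 ⟨by linarith, by linarith⟩
  exact sub_eq_zero.1 (Int.abs_lt_one_iff.1 (by exact_mod_cast hlt))

theorem abs_invLift_sub_le (hlam : 1 ≤ lam) {T₁ T₂ : CM lam Astar} {c D : ℝ}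
    (h : ∀ s, |T₁.F s - T₂.F s - c| ≤ D) (t : ℝ) : |T₁.invLift t - T₂.invLift (t - c)| ≤ D := by
  have hlam_pos : 0 < lam := by linarith
  calc |T₁.invLift t - T₂.invLift (t - c)|
      ≤ lam * |T₁.invLift t - T₂.invLift (t - c)| := le_mul_of_one_le_left (abs_nonneg _) hlam
    _ ≤ |T₂.F (T₁.invLift t) - T₂.F (T₂.invLift (t - c))| := T₂.mul_abs_sub_le _ _
    _ = |T₁.F (T₁.invLift t) - T₂.F (T₁.invLift t) - c| := by
        rw [T₁.lift_invLift hlam_pos, T₂.lift_invLift hlam_pos, abs_sub_comm, sub_right_comm]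
    _ ≤ D := h _

theorem abs_deriv_lift_invLift_sub_le (hlam : 1 ≤ lam) {T₁ T₂ : CM lam Astar} {c : ℝ}
    (h : ∀ s, |T₁.F s - T₂.F s - c| ≤ dC1 T₁ T₂) (t : ℝ) :
    |deriv T₁.F (T₁.invLift t) - deriv T₂.F (T₂.invLift (t - c))| ≤ (Astar + 1) * dC1 T₁ T₂ := by
  have hA := T₁.astar_nonneg
  calc |deriv T₁.F (T₁.invLift t) - deriv T₂.F (T₂.invLift (t - c))|
      ≤ |deriv T₁.F (T₁.invLift t) - deriv T₂.F (T₁.invLift t)| +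
          |deriv T₂.F (T₁.invLift t) - deriv T₂.F (T₂.invLift (t - c))| := abs_sub_le _ _ _
    _ ≤ dC1 T₁ T₂ + Astar * |T₁.invLift t - T₂.invLift (t - c)| :=
        add_le_add (abs_deriv_lift_sub_le_dC1 T₁ T₂ _) (T₂.abs_deriv_lift_sub_le _ _)
    _ ≤ dC1 T₁ T₂ + Astar * dC1 T₁ T₂ := by gcongr; exact abs_invLift_sub_le hlam h t
    _ = (Astar + 1) * dC1 T₁ T₂ := by ring

theorem abs_liftTransfer_sub_le (hlam : 1 ≤ lam) {T₁ T₂ : CM lam Astar} {c : ℝ}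
    (h : ∀ s, |T₁.F s - T₂.F s - c| ≤ dC1 T₁ T₂) {g : Circle1 → ℝ} {L S : ℝ} (hL : 0 ≤ L)
    (hgL : ∀ x y, |g x - g y| ≤ L * dist x y) (hgS : ∀ x, |g x| ≤ S) (t : ℝ) :
    |T₁.liftTransfer g t - T₂.liftTransfer g (t - c)| ≤
      T₁.liftTransfer (fun _ => (L + S * (Astar + 1)) * dC1 T₁ T₂) t := by
  have hS : 0 ≤ S := (abs_nonneg _).trans (hgS 0)
  have hg : |g (T₁.invLift t : ℝ) - g (T₂.invLift (t - c) : ℝ)| ≤ L * dC1 T₁ T₂ :=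
    (hgL _ _).trans <| mul_le_mul_of_nonneg_left
      ((Circle1.dist_coe_le _ _).trans (abs_invLift_sub_le hlam h t)) hL
  refine (abs_div_sub_div_le (by linarith [T₁.expanding (T₁.invLift t)])
    (hlam.trans (T₂.expanding _))).trans (div_le_div_of_nonneg_right ?_ ?_)
  · calc |g (T₁.invLift t : ℝ) - g (T₂.invLift (t - c) : ℝ)| + |g (T₂.invLift (t - c) : ℝ)| *
          |deriv T₁.F (T₁.invLift t) - deriv T₂.F (T₂.invLift (t - c))|
        ≤ L * dC1 T₁ T₂ + S * ((Astar + 1) * dC1 T₁ T₂) :=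
          add_le_add hg (mul_le_mul (hgS _) (abs_deriv_lift_invLift_sub_le hlam h t)
            (abs_nonneg _) hS)
      _ = (L + S * (Astar + 1)) * dC1 T₁ T₂ := by ring
  · exact (T₁.deriv_lift_pos (by linarith) _).le

theorem abs_transfer_sub_le_of_dC1_lt (hlam : 1 ≤ lam) {a : ℝ} (ha : 0 ≤ a)
    (hal : a + Astar ≤ lam * a) {T₁ T₂ : CM lam Astar} (hD : dC1 T₁ T₂ < 1 / 2)
    {g : Circle1 → ℝ} {L S : ℝ} (hL : 0 ≤ L) (hgL : ∀ x y, |g x - g y| ≤ L * dist x y)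
    (hgS : ∀ x, |g x| ≤ S) (x : Circle1) :
    |transfer T₁ g x - transfer T₂ g x| ≤
      Real.exp (a / 2) * ((L + S * (Astar + 1)) * dC1 T₁ T₂) := by
  have hlam_pos : 0 < lam := by linarith
  have hS : 0 ≤ S := (abs_nonneg _).trans (hgS 0)
  have hA := T₁.astar_nonneg
  have hD_nonneg := dC1_nonneg T₁ T₂
  obtain ⟨n, hn⟩ := exists_int_abs_lift_sub_le hD
  obtain ⟨t, rfl⟩ := QuotientAddGroup.mk_surjective x
  have hshift : ((t - n : ℝ) : Circle1) = t :=
    Circle1.coe_eq_coe_iff.2 ⟨-n, by push_cast; ring⟩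
  have hsum : transfer T₁ g t - transfer T₂ g t = ∑ j ∈ Finset.range T₁.deg.toNat,
      (T₁.liftTransfer g (t + j) - T₂.liftTransfer g (t + j - n)) := by
    rw [← hshift, T₂.transfer_coe hlam_pos, ← deg_eq_of_abs_lift_sub_le hD hn, hshift,
      T₁.transfer_coe hlam_pos, ← Finset.sum_sub_distrib]
    simp only [sub_add_eq_add_sub]
  calc |transfer T₁ g t - transfer T₂ g t|
      ≤ ∑ j ∈ Finset.range T₁.deg.toNat,
          T₁.liftTransfer (fun _ => (L + S * (Astar + 1)) * dC1 T₁ T₂) (t + j) := by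
        rw [hsum]
        exact (Finset.abs_sum_le_sum_abs _ _).trans
          (Finset.sum_le_sum fun j _ => abs_liftTransfer_sub_le hlam hn hL hgL hgS _)
    _ = transfer T₁ (fun _ => (L + S * (Astar + 1)) * dC1 T₁ T₂) t :=
        (T₁.transfer_coe hlam_pos _ t).symm
    _ ≤ _ := T₁.transfer_const_le hlam ha hal (by positivity) _

theorem abs_transfer_sub_le_of_le_dC1 (hlam : 1 ≤ lam) {a : ℝ} (ha : 0 ≤ a)
    (hal : a + Astar ≤ lam * a) {T₁ T₂ : CM lam Astar} (hD : 1 / 2 ≤ dC1 T₁ T₂)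
    {g : Circle1 → ℝ} {S : ℝ} (hgS : ∀ x, |g x| ≤ S) (x : Circle1) :
    |transfer T₁ g x - transfer T₂ g x| ≤ Real.exp (a / 2) * (4 * S * dC1 T₁ T₂) := by
  have hS : 0 ≤ S := (abs_nonneg _).trans (hgS 0)
  have hbound (T : CM lam Astar) : |transfer T g x| ≤ Real.exp (a / 2) * S :=
    (T.abs_transfer_le (by linarith) hgS x).trans (T.transfer_const_le hlam ha hal hS x)
  calc |transfer T₁ g x - transfer T₂ g x|
      ≤ |transfer T₁ g x| + |transfer T₂ g x| := abs_sub _ _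
    _ ≤ Real.exp (a / 2) * (4 * S * (1 / 2)) := by linarith [hbound T₁, hbound T₂]
    _ ≤ Real.exp (a / 2) * (4 * S * dC1 T₁ T₂) := by gcongr

theorem abs_transfer_sub_le (hlam : 1 ≤ lam) {a : ℝ} (ha : 0 ≤ a) (hal : a + Astar ≤ lam * a)
    (T₁ T₂ : CM lam Astar) {g : Circle1 → ℝ} {K : NNReal} (hg : LipschitzWith K g)
    (x : Circle1) :
    |transfer T₁ g x - transfer T₂ g x| ≤
      Real.exp (a / 2) * (4 + Astar) * lipNorm g * dC1 T₁ T₂ := by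
  have hA := T₁.astar_nonneg
  have hL := lipConst_nonneg g
  have hS := supNorm_nonneg g
  have hD_nonneg := dC1_nonneg T₁ T₂
  have hgS := abs_le_supNorm hg.continuous
  rw [mul_assoc (Real.exp (a / 2)), mul_assoc (Real.exp (a / 2)), lipNorm]
  rcases lt_or_ge (dC1 T₁ T₂) (1 / 2) with hD | hD
  · refine (abs_transfer_sub_le_of_dC1_lt hlam ha hal hD hL
      (abs_sub_le_lipConst_mul_dist hg) hgS x).trans ?_
    gcongr
    nlinarith
  · refine (abs_transfer_sub_le_of_le_dC1 hlam ha hal hD hgS x).trans ?_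
    gcongr
    · linarith
    · linarith

end CM

/-- `g` is a difference of two functions from the cone of log-Lipschitz functions with constant
`a`, each of integral at most `M`. Transfer operators preserve this class uniformly, so it gives a
Lasota–Yorke type control of `g` under iteration. -/
def IsConeDiff (a M : ℝ) (g : Circle1 → ℝ) : Prop :=
  ∃ f₁ f₂ : Circle1 → ℝ, IsLogLipschitz a f₁ ∧ IsLogLipschitz a f₂ ∧
    ∫ x, f₁ x ≤ M ∧ ∫ x, f₂ x ≤ M ∧ g = fun x => f₁ x - f₂ x

namespace IsConeDiff

variable {lam Astar a M : ℝ} {g : Circle1 → ℝ}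

theorem transfer (hlam : 1 ≤ lam) (ha : 0 ≤ a) (hal : a + Astar ≤ lam * a) (T : CM lam Astar)
    (hg : IsConeDiff a M g) : IsConeDiff a M (transfer T g) := by
  have hlam_pos : 0 < lam := by linarith
  obtain ⟨f₁, f₂, hf₁, hf₂, hM₁, hM₂, rfl⟩ := hg
  refine ⟨_, _, T.isLogLipschitz_transfer hlam ha hal hf₁,
    T.isLogLipschitz_transfer hlam ha hal hf₂, ?_, ?_, funext (T.transfer_sub hlam_pos f₁ f₂)⟩
  · rwa [T.integral_transfer hlam_pos hf₁.continuous]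
  · rwa [T.integral_transfer hlam_pos hf₂.continuous]

theorem transferIter (hlam : 1 ≤ lam) (ha : 0 ≤ a) (hal : a + Astar ≤ lam * a)
    (Ts : ℕ → CM lam Astar) (hg : IsConeDiff a M g) (k : ℕ) :
    IsConeDiff a M (transferIter Ts k g) := by
  induction k with
  | zero => exact hg
  | succ k ih => exact ih.transfer hlam ha hal (Ts (k + 1))

theorem abs_sub_le (ha : 0 ≤ a) (hg : IsConeDiff a M g) (x y : Circle1) :
    |g x - g y| ≤ 2 * a * (Real.exp (a / 2) * M) * dist x y := by
  obtain ⟨f₁, f₂, hf₁, hf₂, hM₁, hM₂, rfl⟩ := hg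
  have hle {f : Circle1 → ℝ} (hf : IsLogLipschitz a f) (hM : ∫ x, f x ≤ M) :
      |f x - f y| ≤ a * (Real.exp (a / 2) * M) * dist x y :=
    hf.abs_sub_le ha (fun z => (hf.le_exp_half_mul_integral ha z).trans (by gcongr)) x y
  calc |f₁ x - f₂ x - (f₁ y - f₂ y)| = |(f₁ x - f₁ y) - (f₂ x - f₂ y)| := by
        rw [sub_sub_sub_comm]
    _ ≤ |f₁ x - f₁ y| + |f₂ x - f₂ y| := abs_sub _ _
    _ ≤ 2 * a * (Real.exp (a / 2) * M) * dist x y := by linarith [hle hf₁ hM₁, hle hf₂ hM₂]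

theorem abs_le (ha : 0 ≤ a) (hg : IsConeDiff a M g) (x : Circle1) :
    |g x| ≤ Real.exp (a / 2) * M := by
  obtain ⟨f₁, f₂, hf₁, hf₂, hM₁, hM₂, rfl⟩ := hg
  have hle {f : Circle1 → ℝ} (hf : IsLogLipschitz a f) (hM : ∫ x, f x ≤ M) :
      f x ≤ Real.exp (a / 2) * M :=
    (hf.le_exp_half_mul_integral ha x).trans (by gcongr)
  exact abs_sub_le_of_nonneg_of_le (hf₁.nonneg x) (hle hf₁ hM₁) (hf₂.nonneg x) (hle hf₂ hM₂)

theorem exists_lipschitzWith (ha : 0 ≤ a) (hg : IsConeDiff a M g) :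
    ∃ K : NNReal, LipschitzWith K g :=
  ⟨_, LipschitzWith.of_dist_le' (hg.abs_sub_le ha)⟩

theorem lipNorm_le (ha : 0 ≤ a) (hg : IsConeDiff a M g) :
    lipNorm g ≤ (2 * a + 1) * (Real.exp (a / 2) * M) := by
  have hM : 0 ≤ Real.exp (a / 2) * M := (abs_nonneg _).trans (hg.abs_le ha 0)
  rw [add_one_mul]
  exact add_le_add (lipConst_le (by positivity) (hg.abs_sub_le ha)) (supNorm_le (hg.abs_le ha))

theorem of_lipschitzWith (ha : 1 ≤ a) {h : Circle1 → ℝ} {K : NNReal} (hh : LipschitzWith K h) :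
    IsConeDiff a (3 * lipNorm h) h := by
  set N := lipNorm h
  have hN : 0 ≤ N := lipNorm_nonneg h
  have hlip_le : lipConst h ≤ N := le_add_of_nonneg_right (supNorm_nonneg h)
  have habs (x : Circle1) : |h x| ≤ N :=
    (abs_le_supNorm hh.continuous x).trans (le_add_of_nonneg_left (lipConst_nonneg h))
  have hshift : IsLogLipschitz a fun x => h x + 2 * N := by
    refine .of_abs_sub_le (by linarith) hN (fun x => by linarith [neg_abs_le (h x), habs x])
      (hlip_le.trans (le_mul_of_one_le_left hN ha)) fun x y => ?_
    simpa only [add_sub_add_right_eq_sub] using abs_sub_le_lipConst_mul_dist hh x y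
  refine ⟨_, fun _ => 2 * N, hshift, .const (by linarith) (by linarith), ?_, ?_, by simp⟩
  · calc ∫ x, (h x + 2 * N) ≤ ∫ _ : Circle1, 3 * N :=
          integral_mono hshift.integrable (integrable_const _) fun x => by
            linarith [le_abs_self (h x), habs x]
      _ = 3 * N := by simp
  · simpa using mul_le_mul_of_nonneg_right (by norm_num : (2 : ℝ) ≤ 3) hN

end IsConeDiff

section Perturbation

variable {lam Astar a : ℝ}

theorem exists_cone_majorant (hlam : 1 ≤ lam) (ha : 0 ≤ a) (hal : a + Astar ≤ lam * a)
    (Ts Ts' : ℕ → CM lam Astar) {h : Circle1 → ℝ} {b : ℕ → ℝ}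
    (hb : ∀ k x, |transfer (Ts (k + 1)) (transferIter Ts' k h) x -
      transfer (Ts' (k + 1)) (transferIter Ts' k h) x| ≤ b (k + 1)) (k : ℕ) :
    ∃ u : Circle1 → ℝ, IsLogLipschitz a u ∧ ∫ x, u x = ∑ j ∈ Finset.Icc 1 k, b j ∧
      ∀ x, |transferIter Ts k h x - transferIter Ts' k h x| ≤ u x := by
  have hlam_pos : 0 < lam := by linarith
  induction k with
  | zero => exact ⟨fun _ => 0, .const ha le_rfl, by simp, fun x => by simp [transferIter]⟩
  | succ k ih =>
    obtain ⟨u, hu, hu_int, hu_le⟩ := ih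
    have hTu := (Ts (k + 1)).isLogLipschitz_transfer hlam ha hal hu
    have hb_nonneg : 0 ≤ b (k + 1) := (abs_nonneg _).trans (hb k 0)
    refine ⟨fun x => transfer (Ts (k + 1)) u x + b (k + 1), hTu.add (.const ha hb_nonneg), ?_,
      fun x => ?_⟩
    · rw [integral_add hTu.integrable (integrable_const _),
        (Ts (k + 1)).integral_transfer hlam_pos hu.continuous, hu_int,
        Finset.sum_Icc_succ_top (by omega)]
      simp
    · have hpush := (Ts (k + 1)).abs_transfer_le hlam_pos hu_le x
      rw [CM.transfer_sub hlam_pos] at hpush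
      exact (_root_.abs_sub_le _ _ _).trans (add_le_add hpush (hb k x))

theorem supNorm_transfer_sub_le (hlam : 1 ≤ lam) (ha : 0 ≤ a) (hal : a + Astar ≤ lam * a)
    (T₁ T₂ : CM lam Astar) {h : Circle1 → ℝ} {K : NNReal} (hh : LipschitzWith K h) :
    supNorm (fun x => transfer T₁ h x - transfer T₂ h x) ≤
      Real.exp (a / 2) * (4 + Astar) * lipNorm h * dC1 T₁ T₂ :=
  supNorm_le (CM.abs_transfer_sub_le hlam ha hal T₁ T₂ hh)

theorem supNorm_transferIter_sub_le (hlam : 1 ≤ lam) (ha : 1 ≤ a) (hal : a + Astar ≤ lam * a)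
    (Ts Ts' : ℕ → CM lam Astar) {h : Circle1 → ℝ} {K : NNReal} (hh : LipschitzWith K h) (k : ℕ) :
    supNorm (fun x => transferIter Ts k h x - transferIter Ts' k h x) ≤
      3 * (2 * a + 1) * (4 + Astar) * Real.exp (a / 2) ^ 3 * lipNorm h *
        ∑ j ∈ Finset.Icc 1 k, dC1 (Ts j) (Ts' j) := by
  have ha_nonneg : 0 ≤ a := by linarith
  have hA := (Ts 0).astar_nonneg
  set B := Real.exp (a / 2) * (4 + Astar) *
    ((2 * a + 1) * (Real.exp (a / 2) * (3 * lipNorm h))) with hB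
  have hstep (k : ℕ) (x : Circle1) : |transfer (Ts (k + 1)) (transferIter Ts' k h) x -
      transfer (Ts' (k + 1)) (transferIter Ts' k h) x| ≤
      B * dC1 (Ts (k + 1)) (Ts' (k + 1)) := by
    have hg := (IsConeDiff.of_lipschitzWith ha hh).transferIter hlam ha_nonneg hal Ts' k
    obtain ⟨K', hK'⟩ := hg.exists_lipschitzWith ha_nonneg
    refine (CM.abs_transfer_sub_le hlam ha_nonneg hal _ _ hK' x).trans ?_
    exact mul_le_mul_of_nonneg_right (mul_le_mul_of_nonneg_left (hg.lipNorm_le ha_nonneg)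
      (by positivity)) (CM.dC1_nonneg _ _)
  obtain ⟨u, hu, hu_int, hu_le⟩ := exists_cone_majorant hlam ha_nonneg hal Ts Ts'
    (b := fun j => B * dC1 (Ts j) (Ts' j)) hstep k
  refine supNorm_le fun x => (hu_le x).trans ?_
  calc u x ≤ Real.exp (a / 2) * ∫ y, u y := hu.le_exp_half_mul_integral ha_nonneg x
    _ = _ := by rw [hu_int, ← Finset.mul_sum, hB]; ring

end Perturbation

/-- Lemma `lem:transfer_pert`.  Perturbation bounds for transfer operators,
`Lip → C⁰`: `‖(ℒ₁ − ℒ₂)h‖_∞ ≤ C‖h‖_Lip d_{C¹}(T₁,T₂)` and the telescoped bound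
`‖(ℒ_k⋯ℒ_1 − ℒ̃_k⋯ℒ̃_1)h‖_∞ ≤ C‖h‖_Lip Σ_{j=1}^k d_{C¹}(T_j, T̃_j)`. -/
theorem statement3 {lam Astar : ℝ} (hlam : 1 < lam) (hA : 0 < Astar) :
    ∃ C : ℝ, 0 < C ∧
      (∀ (T₁ T₂ : CM lam Astar) (h : Circle1 → ℝ), (∃ K : NNReal, LipschitzWith K h) →
        supNorm (fun x => transfer T₁ h x - transfer T₂ h x) ≤ C * lipNorm h * dC1 T₁ T₂) ∧
      (∀ k : ℕ, 1 ≤ k → ∀ (Ts Ts' : ℕ → CM lam Astar) (h : Circle1 → ℝ),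
        (∃ K : NNReal, LipschitzWith K h) →
        supNorm (fun x => transferIter Ts k h x - transferIter Ts' k h x) ≤
          C * lipNorm h * ∑ j ∈ Finset.Icc 1 k, dC1 (Ts j) (Ts' j)) := by
  obtain ⟨a, ha, hal⟩ : ∃ a, 1 ≤ a ∧ a + Astar ≤ lam * a := by
    have hlam_sub : 0 < lam - 1 := sub_pos.2 hlam
    refine ⟨Astar / (lam - 1) + 1, by linarith [div_pos hA hlam_sub], ?_⟩
    nlinarith [div_mul_cancel₀ Astar hlam_sub.ne']
  set C₁ := Real.exp (a / 2) * (4 + Astar)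
  set C₂ := 3 * (2 * a + 1) * (4 + Astar) * Real.exp (a / 2) ^ 3
  refine ⟨max C₁ C₂, lt_max_of_lt_left (by positivity), fun T₁ T₂ h ⟨K, hh⟩ => ?_,
    fun k _ Ts Ts' h ⟨K, hh⟩ => ?_⟩
  · refine (supNorm_transfer_sub_le hlam.le (by linarith) hal T₁ T₂ hh).trans ?_
    gcongr
    exacts [CM.dC1_nonneg _ _, lipNorm_nonneg h, le_max_left _ _]
  · refine (supNorm_transferIter_sub_le hlam.le ha hal Ts Ts' hh k).trans ?_
    gcongr
    exacts [Finset.sum_nonneg fun j _ => CM.dC1_nonneg _ _, lipNorm_nonneg h, le_max_right _ _]
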